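/- arXiv:2205.09243 — 2 statements merged into one kernel-verified Lean document; each statement's English description precedes it below -/
import Mathlib

section
/- For every integer d ≥ 1 there exists a constant K = K(d) > 0 with the following property. Let ρ ≥ 0, let Z = (z_1, …, z_n) be a non-overlapping configuration of n entities of radius ρ in ℝ^d with pairwise distinct centers, and let 1 ≤ x ≤ n−1 be an integer. Then for every index j, the number of indices i such that the entity e_j (the closed ball of center z_j and radius ρ) intersects the x-ball B_i(x) is at most K·x. -/
open Metric Set

/-- The `x`-separation of entity `i` in the configuration `z` of entities of radius `ρ`:
the `x`-th smallest value of `dist (z i) (z j) - 2ρ` over `j ≠ i`. -/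
noncomputable def xSep {d n : ℕ} (ρ : ℝ) (z : Fin n → EuclideanSpace ℝ (Fin d))
    (x : ℕ) (i : Fin n) : ℝ :=
  sInf {r : ℝ | x ≤ {j : Fin n | j ≠ i ∧ dist (z i) (z j) - 2 * ρ ≤ r}.ncard}

/-!
If the `x`-ball of `e_i` meets `e_j`, then fewer than `x` centers other than `z i` are strictly
nearer to `z i` than `z j` is. Split the space around `z j` into finitely many cones, so narrow
that of two nonzero vectors in the same cone the longer one is nearer to the shorter one than to
the origin. In each cone, the counted index `i` farthest from `z j` has all other counted indices
of that cone strictly nearer to it than `z j` is, so there are at most `x` of them. With `m` cones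
and `j` itself, this gives at most `m * x + 1 ≤ (m + 1) * x` indices.
-/

section Separation

variable {ι X : Type*} [PseudoMetricSpace X] {z : ι → X} {p : X} {x : ℕ} {i : ι}

/-- The `x`-separation of `i` for a family of points of an arbitrary metric space, as in `xSep`. -/
noncomputable def separation (ρ : ℝ) (z : ι → X) (x : ℕ) (i : ι) : ℝ :=
  sInf {r : ℝ | x ≤ {j : ι | j ≠ i ∧ dist (z i) (z j) - 2 * ρ ≤ r}.ncard}

/-- The indices other than `i` whose points are strictly nearer to `z i` than `p` is. -/
def nearerIndices (z : ι → X) (p : X) (i : ι) : Set ι :=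
  {k | k ≠ i ∧ dist (z i) (z k) < dist (z i) p}

lemma bddBelow_setOf_le_ncard_sub_le (ρ : ℝ) (z : ι → X) (i : ι) (hx : 0 < x) :
    BddBelow {r : ℝ | x ≤ {j : ι | j ≠ i ∧ dist (z i) (z j) - 2 * ρ ≤ r}.ncard} := by
  refine ⟨-(2 * ρ), fun r hr ↦ ?_⟩
  obtain ⟨j, -, hj⟩ := nonempty_of_ncard_ne_zero (hx.trans_le hr).ne'
  linarith [dist_nonneg (x := z i) (y := z j)]

lemma ncard_nearerIndices_lt_of_dist_le_separation [Finite ι] {ρ : ℝ} (hx : 0 < x)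
    (h : dist (z i) p - 2 * ρ ≤ separation ρ z x i) : (nearerIndices z p i).ncard < x := by
  by_contra! hcard
  obtain ⟨m, hm, hmax⟩ := exists_max_image (nearerIndices z p i) (fun k ↦ dist (z i) (z k))
    (toFinite _) (nonempty_of_ncard_ne_zero (hx.trans_le hcard).ne')
  have separation_le : separation ρ z x i ≤ dist (z i) (z m) - 2 * ρ :=
    csInf_le (bddBelow_setOf_le_ncard_sub_le ρ z i hx) <|
      hcard.trans <| ncard_le_ncard fun k hk ↦ ⟨hk.1, by linarith [hmax k hk]⟩
  linarith [hm.2]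

lemma ncard_nearerIndices_lt_of_nonempty_inter [Finite ι] {ρ : ℝ} (hx : 0 < x)
    (h : (closedBall p ρ ∩ closedBall (z i) (ρ + separation ρ z x i)).Nonempty) :
    (nearerIndices z p i).ncard < x := by
  refine ncard_nearerIndices_lt_of_dist_le_separation (ρ := ρ) hx ?_
  have dist_le := dist_le_add_of_nonempty_closedBall_inter_closedBall h
  rw [dist_comm] at dist_le
  linarith

lemma card_le_of_forall_ncard_nearerIndices_lt [Finite ι] {C : Finset ι}
    (hnear : ∀ i ∈ C, ∀ k ∈ C, dist (z k) p ≤ dist (z i) p → dist (z i) (z k) < dist (z i) p)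
    (hcard : ∀ i ∈ C, (nearerIndices z p i).ncard < x) : C.card ≤ x := by
  classical
  obtain rfl | hC := C.eq_empty_or_nonempty
  · exact Nat.zero_le x
  obtain ⟨m, hm, hmax⟩ := C.exists_max_image (fun i ↦ dist (z i) p) hC
  have erase_subset : (C.erase m : Set ι) ⊆ nearerIndices z p m := fun k hk ↦ by
    obtain ⟨hkm, hkC⟩ := Finset.mem_erase.mp hk
    exact ⟨hkm, hnear m hm k hkC (hmax k hkC)⟩
  calc C.card = (C.erase m).card + 1 := (Finset.card_erase_add_one hm).symm
    _ ≤ (nearerIndices z p m).ncard + 1 := by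
      rw [← ncard_coe_finset]
      gcongr
      exact toFinite _
    _ ≤ x := hcard m hm

end Separation

section Cones

open NormedSpace

variable {E : Type*} [NormedAddCommGroup E]

/-- A coloring of the vectors of `E` has narrow cones if, of two nonzero vectors of the same color,
the longer one is strictly nearer to the shorter one than to the origin. The color classes play the
role of the cones; they are not required to be invariant under scaling. -/
def HasNarrowCones {α : Type*} (c : E → α) : Prop :=
  ∀ ⦃v w : E⦄, w ≠ 0 → ‖w‖ ≤ ‖v‖ → c v = c w → ‖v - w‖ < ‖v‖

lemma norm_sub_lt_of_norm_normalize_sub_lt_one [NormedSpace ℝ E] {v w : E} (hw : w ≠ 0)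
    (hwv : ‖w‖ ≤ ‖v‖) (h : ‖normalize v - normalize w‖ < 1) : ‖v - w‖ < ‖v‖ := by
  have norm_w_pos : 0 < ‖w‖ := norm_pos_iff.mpr hw
  have hv : v ≠ 0 := norm_pos_iff.mp (norm_w_pos.trans_le hwv)
  have decomposition :
      v - w = (‖v‖ - ‖w‖) • normalize v + ‖w‖ • (normalize v - normalize w) := by
    simp [smul_sub, sub_smul]
  calc ‖v - w‖
      ≤ ‖(‖v‖ - ‖w‖) • normalize v‖ + ‖‖w‖ • (normalize v - normalize w)‖ :=
        decomposition ▸ norm_add_le _ _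
    _ = (‖v‖ - ‖w‖) + ‖w‖ * ‖normalize v - normalize w‖ := by
        rw [norm_smul, norm_smul, norm_normalize hv, norm_norm,
          Real.norm_of_nonneg (sub_nonneg.mpr hwv), mul_one]
    _ < (‖v‖ - ‖w‖) + ‖w‖ * 1 := by gcongr
    _ = ‖v‖ := by ring

variable (E) in
lemma exists_hasNarrowCones [NormedSpace ℝ E] [FiniteDimensional ℝ E] :
    ∃ (t : Finset E) (c : E → t), HasNarrowCones c := by
  have : ProperSpace E := FiniteDimensional.proper_real E
  obtain ⟨t, -, ht, hcover⟩ :=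
    (isCompact_closedBall (0 : E) 1).finite_cover_balls (e := 1 / 2) (by norm_num)
  lift t to Finset E using ht
  have exists_near (v : E) : ∃ c : t, dist (normalize v) c < 1 / 2 := by
    have hv : normalize v ∈ closedBall (0 : E) 1 := by
      obtain rfl | hv := eq_or_ne v 0
      · simp
      · simp [norm_normalize hv]
    obtain ⟨c, hct, hc⟩ := mem_iUnion₂.mp (hcover hv)
    exact ⟨⟨c, hct⟩, hc⟩
  choose c hc using exists_near
  refine ⟨t, c, fun v w hw hwv hvw ↦ norm_sub_lt_of_norm_normalize_sub_lt_one hw hwv ?_⟩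
  calc ‖normalize v - normalize w‖ = dist (normalize v) (normalize w) := (dist_eq_norm _ _).symm
    _ ≤ dist (normalize v) (c w) + dist (normalize w) (c w) := dist_triangle_right _ _ _
    _ < 1 / 2 + 1 / 2 := add_lt_add (hvw ▸ hc v) (hc w)
    _ = 1 := by norm_num

end Cones

section Counting

variable {ι E α : Type*} [Finite ι] [NormedAddCommGroup E] {c : E → α} {z : ι → E} {p : E} {x : ℕ}

lemma HasNarrowCones.card_le_of_forall_color_eq (hc : HasNarrowCones c) {C : Finset ι} {a : α}
    (hne : ∀ i ∈ C, z i ≠ p) (hcolor : ∀ i ∈ C, c (z i - p) = a)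
    (hcard : ∀ i ∈ C, (nearerIndices z p i).ncard < x) : C.card ≤ x := by
  refine card_le_of_forall_ncard_nearerIndices_lt (fun i hi k hk hki ↦ ?_) hcard
  rw [dist_eq_norm, dist_eq_norm] at hki
  have norm_lt := hc (sub_ne_zero.mpr (hne k hk)) hki ((hcolor i hi).trans (hcolor k hk).symm)
  rwa [sub_sub_sub_cancel_right, ← dist_eq_norm, ← dist_eq_norm] at norm_lt

lemma HasNarrowCones.ncard_setOf_ne_and_ncard_nearerIndices_lt_le [Fintype α]
    (hc : HasNarrowCones c) (z : ι → E) (p : E) (x : ℕ) :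
    {i | z i ≠ p ∧ (nearerIndices z p i).ncard < x}.ncard ≤ Fintype.card α * x := by
  classical
  have := Fintype.ofFinite ι
  rw [ncard_eq_toFinset_card', mul_comm]
  refine Finset.card_le_mul_card_image_of_maps_to (f := fun i ↦ c (z i - p))
    (fun i _ ↦ Finset.mem_univ _) x fun a _ ↦ ?_
  apply hc.card_le_of_forall_color_eq (z := z) (p := p) (a := a) <;>
    simp +contextual

lemma HasNarrowCones.ncard_setOf_ncard_nearerIndices_lt_le [Fintype α]
    (hc : HasNarrowCones c) (hz : Function.Injective z) (p : E) (x : ℕ) :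
    {i | (nearerIndices z p i).ncard < x}.ncard ≤ Fintype.card α * x + 1 := by
  have subset_union : {i | (nearerIndices z p i).ncard < x} ⊆
      {i | z i ≠ p ∧ (nearerIndices z p i).ncard < x} ∪ z ⁻¹' {p} := fun i hi ↦
    (ne_or_eq (z i) p).imp (⟨·, hi⟩) id
  calc {i | (nearerIndices z p i).ncard < x}.ncard
      ≤ {i | z i ≠ p ∧ (nearerIndices z p i).ncard < x}.ncard + (z ⁻¹' {p}).ncard :=
        (ncard_le_ncard subset_union).trans (ncard_union_le _ _)
    _ ≤ Fintype.card α * x + 1 := by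
        gcongr
        · exact hc.ncard_setOf_ne_and_ncard_nearerIndices_lt_le z p x
        · exact ncard_le_one_iff_subsingleton.mpr (subsingleton_singleton.preimage hz)

end Counting

theorem stmt1_general (E : Type*) [NormedAddCommGroup E] [NormedSpace ℝ E]
    [FiniteDimensional ℝ E] :
    ∃ K : ℕ, 0 < K ∧
      ∀ {ι : Type*} [Finite ι] (ρ : ℝ) (z : ι → E) (x : ℕ),
        Function.Injective z → 1 ≤ x →
        ∀ j : ι,
          {i : ι |
              (closedBall (z j) ρ ∩ closedBall (z i) (ρ + separation ρ z x i)).Nonempty}.ncard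
            ≤ K * x := by
  obtain ⟨t, c, hc⟩ := exists_hasNarrowCones E
  refine ⟨Fintype.card t + 1, Nat.succ_pos _, fun {ι} _ ρ z x hz hx j ↦ ?_⟩
  calc {i | (closedBall (z j) ρ ∩ closedBall (z i) (ρ + separation ρ z x i)).Nonempty}.ncard
      ≤ {i | (nearerIndices z (z j) i).ncard < x}.ncard :=
        ncard_le_ncard fun _ hi ↦ ncard_nearerIndices_lt_of_nonempty_inter hx hi
    _ ≤ Fintype.card t * x + 1 := hc.ncard_setOf_ncard_nearerIndices_lt_le hz (z j) x
    _ ≤ (Fintype.card t + 1) * x := by rw [add_one_mul]; gcongr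

theorem stmt1 (d : ℕ) (hd : 1 ≤ d) :
    ∃ K : ℕ, 0 < K ∧
      ∀ (n : ℕ) (ρ : ℝ) (z : Fin n → EuclideanSpace ℝ (Fin d)) (x : ℕ),
        0 ≤ ρ →
        Function.Injective z →
        (∀ i j : Fin n, i ≠ j → 2 * ρ ≤ dist (z i) (z j)) →
        1 ≤ x → x ≤ n - 1 →
        ∀ j : Fin n,
          {i : Fin n |
              (closedBall (z j) ρ ∩ closedBall (z i) (ρ + xSep ρ z x i)).Nonempty}.ncard
            ≤ K * x := by
  obtain ⟨K, hK, hbound⟩ := stmt1_general (EuclideanSpace ℝ (Fin d))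
  exact ⟨K, hK, fun n ρ z x _ hz _ hx _ j ↦ hbound ρ z x hz hx j⟩
end

section
/- Let Z = (z_1, …, z_n) be a stationary non-overlapping configuration of n entities of radius ρ ≥ 0 in ℝ^d, let 1 ≤ x < y ≤ n−1 be integers, fix an index i, and let E_i be the set of entities e_j with j ≠ i whose closed ball intersects B_i(y); then |E_i| ≥ y. Moreover, for any query schedule and any interval (a, a+L] with L ≥ r_i(y): if at most y − x of the members of E_i have a query time in (a, a+L], then the point z_i belongs to at least x + 1 of the uncertainty regions u_j(a+L); in particular the uncertainty ply at time a + L is at least x + 1. -/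
open Metric Set

open Classical in
/-- The uncertainty region at time `t` of a stationary entity of radius `ρ` centered at `z`
with query-time set `Q`: the closed ball about `z` of radius `ρ + (t - p(t))` where `p(t)` is
the last query time at or before `t`, and all of space if there is no query time before `t`. -/
noncomputable def uRegion {d : ℕ} (ρ : ℝ) (z : EuclideanSpace ℝ (Fin d))
    (Q : Set ℝ) (t : ℝ) : Set (EuclideanSpace ℝ (Fin d)) :=
  if (Q ∩ Set.Iic t).Nonempty then
    closedBall z (ρ + (t - sSup (Q ∩ Set.Iic t)))
  else Set.univ

/-!
The `y`-separation `σ` is attained, so at least `y` entities lie within centre distance `σ + 2ρ` of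
`z i`, and each of their balls meets the ball of radius `r = ρ + σ` about `z i`. An entity whose
ball meets that ball has its centre within `ρ + r ≤ ρ + L` of `z i`, so unless it is queried in
`(a, a + L]` its uncertainty region has grown to contain `z i` by time `a + L`. At least
`y - (y - x) = x` such entities stay unqueried, and entity `i` itself is one more.
-/

theorem exists_isLeast_setOf_le_ncard {ι α : Type*} [LinearOrder α] {s : Set ι} (hs : s.Finite)
    (f : ι → α) {k : ℕ} (hk : k ≠ 0) (hks : k ≤ s.ncard) :
    ∃ j ∈ s, IsLeast {r | k ≤ {i ∈ s | f i ≤ r}.ncard} (f j) := by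
  -- Lowering a threshold to the largest value of `f` below it keeps the same sublevel set, so
  -- it suffices to minimise over the finitely many thresholds `f j`.
  have exists_value_le : ∀ r, k ≤ {i ∈ s | f i ≤ r}.ncard →
      ∃ j ∈ s, f j ≤ r ∧ k ≤ {i ∈ s | f i ≤ f j}.ncard := by
    intro r hr
    obtain ⟨j, ⟨hjs, hjr⟩, hmax⟩ := exists_max_image {i ∈ s | f i ≤ r} f
      (hs.subset (sep_subset _ _)) (nonempty_of_ncard_ne_zero (by lia))
    exact ⟨j, hjs, hjr, hr.trans <|
      ncard_le_ncard (fun i hi => ⟨hi.1, hmax i hi⟩) (hs.subset (sep_subset _ _))⟩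
  have thresholds_nonempty : {j ∈ s | k ≤ {i ∈ s | f i ≤ f j}.ncard}.Nonempty := by
    obtain ⟨m, hms, hmax⟩ := exists_max_image s f hs (nonempty_of_ncard_ne_zero (by lia))
    exact ⟨m, hms, hks.trans <|
      ncard_le_ncard (fun i hi => ⟨hi, hmax i hi⟩) (hs.subset (sep_subset _ _))⟩
  obtain ⟨j, ⟨hjs, hkj⟩, hmin⟩ := exists_min_image _ f (hs.subset (sep_subset _ _))
    thresholds_nonempty
  refine ⟨j, hjs, hkj, fun r hr => ?_⟩
  obtain ⟨l, hls, hlr, hkl⟩ := exists_value_le r hr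
  exact (hmin l ⟨hls, hkl⟩).trans hlr

section Separation

variable {d n : ℕ} {ρ : ℝ} {z : Fin n → EuclideanSpace ℝ (Fin d)} {y : ℕ} {i : Fin n}

variable (ρ z i) in
theorem exists_xSep_eq_and_le_ncard (hy : y ≠ 0) (hyn : y < n) :
    (∃ j ≠ i, xSep ρ z y i = dist (z i) (z j) - 2 * ρ) ∧
      y ≤ {j | j ≠ i ∧ dist (z i) (z j) - 2 * ρ ≤ xSep ρ z y i}.ncard := by
  have hcard : ({i}ᶜ : Set (Fin n)).ncard = n - 1 := by
    rw [ncard_compl, Nat.card_fin, ncard_singleton]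
  obtain ⟨j, hji, hleast⟩ := exists_isLeast_setOf_le_ncard (toFinite {i}ᶜ)
    (fun j => dist (z i) (z j) - 2 * ρ) hy (by lia)
  have hxSep : xSep ρ z y i = dist (z i) (z j) - 2 * ρ := hleast.csInf_eq
  exact ⟨⟨j, hji, hxSep⟩, hxSep ▸ hleast.1⟩

theorem le_ncard_closedBall_inter_closedBall_xSep (hρ : 0 ≤ ρ)
    (hsep : ∀ j, i ≠ j → 2 * ρ ≤ dist (z i) (z j)) (hy : y ≠ 0) (hyn : y < n) :
    y ≤ {j | j ≠ i ∧
      (closedBall (z j) ρ ∩ closedBall (z i) (ρ + xSep ρ z y i)).Nonempty}.ncard := by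
  obtain ⟨⟨m, hmi, hm⟩, hcard⟩ := exists_xSep_eq_and_le_ncard ρ z i hy hyn
  have hnonneg : 0 ≤ xSep ρ z y i := by linarith [hsep m hmi.symm]
  refine hcard.trans (ncard_le_ncard fun j ⟨hji, hj⟩ => ⟨hji, ?_⟩)
  rw [← not_disjoint_iff_nonempty_inter,
    disjoint_closedBall_closedBall_iff hρ (add_nonneg hρ hnonneg), not_lt, dist_comm]
  linarith

end Separation

section Uncertainty

variable {d : ℕ} {ρ : ℝ} {Q : Set ℝ} {a b t : ℝ}

theorem closedBall_subset_uRegion (c : EuclideanSpace ℝ (Fin d)) (h : Q ∩ Iic t ⊆ Iic b) :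
    closedBall c (ρ + (t - b)) ⊆ uRegion ρ c Q t := by
  unfold uRegion
  split_ifs with hQ
  · have : sSup (Q ∩ Iic t) ≤ b := csSup_le hQ h
    gcongr
  · exact subset_univ _

theorem center_mem_uRegion (hρ : 0 ≤ ρ) (c : EuclideanSpace ℝ (Fin d)) : c ∈ uRegion ρ c Q t :=
  closedBall_subset_uRegion c inter_subset_right (mem_closedBall_self (by simpa using hρ))

theorem closedBall_subset_uRegion_of_not_nonempty (c : EuclideanSpace ℝ (Fin d))
    (h : ¬(Q ∩ Ioc a t).Nonempty) : closedBall c (ρ + (t - a)) ⊆ uRegion ρ c Q t :=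
  closedBall_subset_uRegion c fun s ⟨hsQ, hst⟩ =>
    not_lt.1 fun has => h ⟨s, hsQ, has, hst⟩

theorem ncard_add_one_le_ncard_queried_add_ncard_mem_uRegion {ι : Type*} [Finite ι] (hρ : 0 ≤ ρ)
    (z : ι → EuclideanSpace ℝ (Fin d)) (Q : ι → Set ℝ) {E : Set ι} {i : ι} (hiE : i ∉ E)
    (hE : ∀ j ∈ E, dist (z i) (z j) ≤ ρ + (t - a)) :
    E.ncard + 1 ≤ {j ∈ E | (Q j ∩ Ioc a t).Nonempty}.ncard +
      {j | z i ∈ uRegion ρ (z j) (Q j) t}.ncard := by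
  set queried := {j ∈ E | (Q j ∩ Ioc a t).Nonempty}
  have hcover : insert i (E \ queried) ⊆ {j | z i ∈ uRegion ρ (z j) (Q j) t} := by
    rintro j (rfl | ⟨hjE, hjq⟩)
    · exact center_mem_uRegion hρ _
    · exact closedBall_subset_uRegion_of_not_nonempty _ (fun hQ => hjq ⟨hjE, hQ⟩) (hE j hjE)
  calc E.ncard + 1 ≤ (E \ queried).ncard + queried.ncard + 1 := by
        gcongr; exact ncard_le_ncard_sdiff_add_ncard E queried
    _ = queried.ncard + (insert i (E \ queried)).ncard := by
        rw [ncard_insert_of_notMem fun h => hiE h.1]; ring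
    _ ≤ queried.ncard + {j | z i ∈ uRegion ρ (z j) (Q j) t}.ncard := by
        gcongr; exact toFinite _

end Uncertainty

theorem stmt10 (d n : ℕ) (hd : 1 ≤ d) (ρ : ℝ) (hρ : 0 ≤ ρ)
    (z : Fin n → EuclideanSpace ℝ (Fin d))
    (hsep : ∀ i j : Fin n, i ≠ j → 2 * ρ ≤ dist (z i) (z j))
    (x y : ℕ) (hx1 : 1 ≤ x) (hxy : x < y) (hyn : y ≤ n - 1)
    (i : Fin n) :
    y ≤ {j : Fin n | j ≠ i ∧
        (closedBall (z j) ρ ∩ closedBall (z i) (ρ + xSep ρ z y i)).Nonempty}.ncard ∧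
    ∀ (Q : Fin n → Set ℝ) (a L : ℝ), ρ + xSep ρ z y i ≤ L →
      {j : Fin n | (j ≠ i ∧
          (closedBall (z j) ρ ∩ closedBall (z i) (ρ + xSep ρ z y i)).Nonempty) ∧
          (Q j ∩ Set.Ioc a (a + L)).Nonempty}.ncard ≤ y - x →
      x + 1 ≤ {j : Fin n | z i ∈ uRegion ρ (z j) (Q j) (a + L)}.ncard := by
  have hcard := le_ncard_closedBall_inter_closedBall_xSep hρ (hsep i)
    (Nat.ne_zero_of_lt hxy) (by lia)
  refine ⟨hcard, fun Q a L hL hqueried => ?_⟩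
  set E := {j : Fin n | j ≠ i ∧
    (closedBall (z j) ρ ∩ closedBall (z i) (ρ + xSep ρ z y i)).Nonempty}
  have hdist : ∀ j ∈ E, dist (z i) (z j) ≤ ρ + (a + L - a) := by
    rintro j ⟨-, hmeet⟩
    have := dist_le_add_of_nonempty_closedBall_inter_closedBall hmeet
    rw [dist_comm]
    linarith
  have hcount := ncard_add_one_le_ncard_queried_add_ncard_mem_uRegion hρ z Q
    (fun hi : i ∈ E => hi.1 rfl) hdist
  have hunqueried := hcount.trans (Nat.add_le_add_right hqueried _)
  omega
end
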